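/- arXiv:2109.02835 — 2 statements merged into one kernel-verified Lean document; each statement's English description precedes it below -/
import Mathlib

section
/- Let a, b be nonnegative integers and k := a + b. Define m̃ ∈ L7(k) by: m̃((1,16)) = 0; m̃(x) = a for every x ∈ P7 with (2,9) ≤ x ≤ (2,15); m̃((1,8)) = a; m̃(x) = k for every x ∈ P7 with (2,1) ≤ x ≤ (6',11); m̃((1,0)) = k (these clauses determine m̃ at all 27 positions, and m̃ ∈ L7(k)). Let D := {c ∈ L7(k) : c((1,0)) = k, c((1,8)) = a, c((1,16)) = 0}, regarded as a poset with the induced order and with covering relations colored as in L7(k) (all colors lie in {2,3,4,5,5',6'}). Then m̃ is the unique maximal element of D, and D is isomorphic to L6(a,b) as a poset with colored covering relations, where the E7 colors 2, 3, 4, 5, 5', 6' correspond to the E6 colors 1', 2', 3', 4', 5', 6', respectively. -/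
noncomputable section

namespace CL

variable {N : Type} [DecidableEq N] [Fintype N]

/-- One-step relation generating the partial order on the poset of positions. -/
def step (adj : N → N → Prop) (pos : Finset (N × ℕ)) (x y : N × ℕ) : Prop :=
  x ∈ pos ∧ y ∈ pos ∧ adj x.1 y.1 ∧ y.2 = x.2 + 1

/-- The partial order on positions, generated by `step`. -/
def ple (adj : N → N → Prop) (pos : Finset (N × ℕ)) : N × ℕ → N × ℕ → Prop :=
  Relation.ReflTransGen (step adj pos)

/-- The lattice of `ℕ`-labellings of the positions which are bounded by `k`, order-reversing,
and satisfy a further constraint `extra`. -/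
def Elt (adj : N → N → Prop) (pos : Finset (N × ℕ)) (k : ℕ)
    (extra : ({x : N × ℕ // x ∈ pos} → ℕ) → Prop) : Type :=
  {c : {x : N × ℕ // x ∈ pos} → ℕ //
    (∀ x, c x ≤ k) ∧ (∀ x y, ple adj pos y.1 x.1 → c x ≤ c y) ∧ extra c}

variable {adj : N → N → Prop} {pos : Finset (N × ℕ)} {k : ℕ}
  {extra : ({x : N × ℕ // x ∈ pos} → ℕ) → Prop}

instance : Finite (Elt adj pos k extra) := by
  apply Finite.of_injective
    (fun c : Elt adj pos k extra =>
      fun x => (⟨c.1 x, Nat.lt_succ_of_le (c.2.1 x)⟩ : Fin (k + 1)))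
  intro c d h
  apply Subtype.ext
  funext x
  exact congrArg Fin.val (congrFun h x)

instance : Fintype (Elt adj pos k extra) := Fintype.ofFinite _

instance : DecidableEq (Elt adj pos k extra) := by unfold Elt; infer_instance

/-- Componentwise comparison of labellings. -/
def elLe (r s : Elt adj pos k extra) : Prop := ∀ x, r.1 x ≤ s.1 x

/-- The covering edge of color `i`: exactly one entry, at a position of color `i`,
is increased by one. -/
def edge (i : N) (r s : Elt adj pos k extra) : Prop :=
  ∃ x : {x : N × ℕ // x ∈ pos}, x.1.1 = i ∧ s.1 x = r.1 x + 1 ∧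
    ∀ y, y ≠ x → s.1 y = r.1 y

instance (i : N) (r s : Elt adj pos k extra) : Decidable (edge i r s) := by
  unfold edge; infer_instance

/-- The rank function: the sum of all entries. -/
def rk (t : Elt adj pos k extra) : ℕ := ∑ x ∈ pos.attach, t.1 x

/-- The connected component of `t` in the graph of color-`i` covering edges. -/
def comp (i : N) (t : Elt adj pos k extra) : Set (Elt adj pos k extra) :=
  {s | Relation.ReflTransGen (fun a b => edge i a b ∨ edge i b a) t s}

/-- The integer `m_i(t) = (ρ(t) − min ρ on comp_i(t)) − (max ρ on comp_i(t) − ρ(t))`. -/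
def mwt (i : N) (t : Elt adj pos k extra) : ℤ :=
  ((rk t : ℤ) - ((sInf (rk '' comp i t) : ℕ) : ℤ)) -
    (((sSup (rk '' comp i t) : ℕ) : ℤ) - (rk t : ℤ))

end CL

/-! ### Type `E₇` data -/

/-- The nodes `1, 2, 3, 4, 5, 5', 6'` of the `E₇` Dynkin diagram. -/
inductive N7 : Type
  | n1 | n2 | n3 | n4 | n5 | n5p | n6p
  deriving DecidableEq

instance : Fintype N7 where
  elems := {.n1, .n2, .n3, .n4, .n5, .n5p, .n6p}
  complete := by intro x; cases x <;> decide

open N7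

/-- Adjacency in the `E₇` Dynkin diagram: edges `1-2, 2-3, 3-4, 4-5, 4-5', 5'-6'`. -/
abbrev adj7 : N7 → N7 → Prop := fun a b =>
  (a, b) ∈ ([(n1, n2), (n2, n3), (n3, n4), (n4, n5), (n4, n5p), (n5p, n6p)] : List (N7 × N7)) ∨
  (b, a) ∈ ([(n1, n2), (n2, n3), (n3, n4), (n4, n5), (n4, n5p), (n5p, n6p)] : List (N7 × N7))

/-- The 27 (color, rank) positions of the minuscule poset `P₇ = P_{E₇}(ω₁)`. -/
def pos7 : Finset (N7 × ℕ) :=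
  {(n1, 0), (n2, 1), (n3, 2), (n4, 3), (n5, 4), (n5p, 4), (n4, 5), (n6p, 5), (n3, 6),
   (n5p, 6), (n2, 7), (n4, 7), (n1, 8), (n3, 8), (n5, 8), (n2, 9), (n4, 9), (n3, 10),
   (n5p, 10), (n4, 11), (n6p, 11), (n5, 12), (n5p, 12), (n4, 13), (n3, 14), (n2, 15), (n1, 16)}

/-- The lattice `L7(k) = L_{E₇}(kω₁)` of order-reversing labellings of `P₇` by `{0,…,k}`. -/
abbrev L7 (k : ℕ) : Type := CL.Elt adj7 pos7 k (fun _ => True)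

/-- The Cartan matrix of type `E₇`, indexed by the nodes. -/
def A7 : N7 → N7 → ℤ := fun i j => if i = j then 2 else if adj7 i j then -1 else 0

/-! ### Type `E₆` data -/

/-- The nodes `1', 2', 3', 4', 5', 6'` of the `E₆` Dynkin diagram. -/
inductive N6 : Type
  | m1 | m2 | m3 | m4 | m5 | m6
  deriving DecidableEq

instance : Fintype N6 where
  elems := {.m1, .m2, .m3, .m4, .m5, .m6}
  complete := by intro x; cases x <;> decide

open N6

/-- Adjacency in the `E₆` Dynkin diagram: edges `1'-2', 2'-3', 3'-4', 3'-5', 5'-6'`. -/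
abbrev adj6 : N6 → N6 → Prop := fun a b =>
  (a, b) ∈ ([(m1, m2), (m2, m3), (m3, m4), (m3, m5), (m5, m6)] : List (N6 × N6)) ∨
  (b, a) ∈ ([(m1, m2), (m2, m3), (m3, m4), (m3, m5), (m5, m6)] : List (N6 × N6))

/-- The Cartan matrix of type `E₆`, indexed by the nodes. -/
def A6 : N6 → N6 → ℤ := fun i j => if i = j then 2 else if adj6 i j then -1 else 0

/-- The 24 (color, rank) positions of the poset `P24 = 𝒫`. -/
def pos24 : Finset (N6 × ℕ) :=
  {(m1, 0), (m2, 1), (m3, 2), (m4, 3), (m5, 3), (m3, 4), (m6, 4), (m2, 5), (m5, 5),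
   (m1, 6), (m3, 6), (m2, 7), (m4, 7), (m1, 8), (m3, 8), (m2, 9), (m5, 9), (m3, 10),
   (m6, 10), (m4, 11), (m5, 11), (m3, 12), (m2, 13), (m1, 14)}

/-- The 16 (color, rank) positions of the minuscule poset `P16' = P_{E₆}(ω₁')`. -/
def pos16p : Finset (N6 × ℕ) :=
  {(m6, 0), (m5, 1), (m3, 2), (m2, 3), (m4, 3), (m1, 4), (m3, 4), (m2, 5), (m5, 5),
   (m3, 6), (m6, 6), (m4, 7), (m5, 7), (m3, 8), (m2, 9), (m1, 10)}

/-- The 16 (color, rank) positions of the minuscule poset `P16'' = P_{E₆}(ω₆')`. -/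
def pos16pp : Finset (N6 × ℕ) :=
  {(m1, 0), (m2, 1), (m3, 2), (m4, 3), (m5, 3), (m3, 4), (m6, 4), (m2, 5), (m5, 5),
   (m1, 6), (m3, 6), (m2, 7), (m4, 7), (m3, 8), (m5, 9), (m6, 10)}

/-- The extra constraints on elements of `L6(a,b)`: `c((1',8)) ≤ a` and `c((1',6)) ≥ a`. -/
def extra6 (a : ℕ) : ({x : N6 × ℕ // x ∈ pos24} → ℕ) → Prop := fun c =>
  c ⟨(m1, 8), by decide⟩ ≤ a ∧ a ≤ c ⟨(m1, 6), by decide⟩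

/-- The lattice `L6(a,b) = L_{E₆}(aω₁' + bω₆')`. -/
abbrev L6ab (a b : ℕ) : Type := CL.Elt adj6 pos24 (a + b) (extra6 a)

/-- The lattice `L6'(k) = L_{E₆}(kω₁')`. -/
abbrev L6p (k : ℕ) : Type := CL.Elt adj6 pos16p k (fun _ => True)

/-- The lattice `L6''(k) = L_{E₆}(kω₆')`. -/
abbrev L6pp (k : ℕ) : Type := CL.Elt adj6 pos16pp k (fun _ => True)

/-- The defining clauses for the element `m̃` of `L7(a+b)`. -/
def clauses14 (a b : ℕ) (mt : L7 (a + b)) : Prop :=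
  mt.1 ⟨(n1, 16), by decide⟩ = 0 ∧
  (∀ x : {x : N7 × ℕ // x ∈ pos7},
    CL.ple adj7 pos7 (n2, 9) x.1 → CL.ple adj7 pos7 x.1 (n2, 15) → mt.1 x = a) ∧
  mt.1 ⟨(n1, 8), by decide⟩ = a ∧
  (∀ x : {x : N7 × ℕ // x ∈ pos7},
    CL.ple adj7 pos7 (n2, 1) x.1 → CL.ple adj7 pos7 x.1 (n6p, 11) → mt.1 x = a + b) ∧
  mt.1 ⟨(n1, 0), by decide⟩ = a + b

/-- The set `D`: elements of `L7(a+b)` with prescribed values at the three color-1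
positions. -/
def D14 (a b : ℕ) : Type :=
  {c : L7 (a + b) // c.1 ⟨(n1, 0), by decide⟩ = a + b ∧ c.1 ⟨(n1, 8), by decide⟩ = a ∧
    c.1 ⟨(n1, 16), by decide⟩ = 0}

open CL in
theorem ple_up {N : Type} [DecidableEq N] [Fintype N] (adj : N → N → Prop) (pos A : Finset (N × ℕ))
    (base : N × ℕ) (hA : A ⊆ pos)
    (h : ∀ x ∈ A, x = base ∨ ∃ y ∈ A, adj y.1 x.1 ∧ x.2 = y.2 + 1) :
    ∀ n, ∀ x ∈ A, x.2 = n → ple adj pos base x := by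
  intro n
  induction n with
  | zero =>
    intro x hx hn
    rcases h x hx with rfl | ⟨y, _, _, h2⟩
    · exact Relation.ReflTransGen.refl
    · omega
  | succ n ih =>
    intro x hx hn
    rcases h x hx with rfl | ⟨y, hy, h1, h2⟩
    · exact Relation.ReflTransGen.refl
    · exact (ih y hy (by omega)).tail ⟨hA hy, hA hx, h1, h2⟩

open CL in
theorem ple_down {N : Type} [DecidableEq N] [Fintype N] (adj : N → N → Prop)
    (pos A : Finset (N × ℕ))
    (top : N × ℕ) (hA : A ⊆ pos) (hb : ∀ x ∈ A, x.2 ≤ top.2)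
    (h : ∀ x ∈ A, x = top ∨ ∃ y ∈ A, adj x.1 y.1 ∧ y.2 = x.2 + 1) :
    ∀ n, ∀ x ∈ A, top.2 - x.2 = n → ple adj pos x top := by
  intro n
  induction n with
  | zero =>
    intro x hx hn
    rcases h x hx with rfl | ⟨y, hy, _, h2⟩
    · exact Relation.ReflTransGen.refl
    · have := hb y hy
      omega
  | succ n ih =>
    intro x hx hn
    rcases h x hx with rfl | ⟨y, hy, h1, h2⟩
    · exact Relation.ReflTransGen.refl
    · exact Relation.ReflTransGen.head ⟨hA hx, hA hy, h1, h2⟩ (ih y hy (by omega))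

theorem ple_rank {N : Type} [DecidableEq N] [Fintype N] {adj : N → N → Prop}
    {pos : Finset (N × ℕ)} {x y : N × ℕ} (h : CL.ple adj pos x y) : x.2 ≤ y.2 := by
  induction h with
  | refl => exact le_rfl
  | tail _ h ih => have := h.2.2.2; omega

theorem anti_of_step {N : Type} [DecidableEq N] [Fintype N] {adj : N → N → Prop}
    {pos : Finset (N × ℕ)} (c : N × ℕ → ℕ)
    (hc : ∀ x y, CL.step adj pos x y → c y ≤ c x) {x y : N × ℕ} (h : CL.ple adj pos x y) :
    c y ≤ c x := by
  induction h with
  | refl => exact le_rfl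
  | tail _ h ih => exact (hc _ _ h).trans ih

/-- The positions of `P₇` that are at least `(1,8)`. -/
def upU : Finset (N7 × ℕ) :=
  {(n1, 8), (n2, 9), (n3, 10), (n4, 11), (n5, 12), (n5p, 12), (n4, 13), (n3, 14), (n2, 15),
    (n1, 16)}

/-- The positions in the interval from `(2,9)` to `(2,15)`. -/
def midA : Finset (N7 × ℕ) :=
  {(n2, 9), (n3, 10), (n4, 11), (n5, 12), (n5p, 12), (n4, 13), (n3, 14), (n2, 15)}

/-- The positions in the interval from `(2,1)` to `(6',11)`. -/
def lowB : Finset (N7 × ℕ) :=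
  {(n2, 1), (n3, 2), (n4, 3), (n5, 4), (n5p, 4), (n4, 5), (n6p, 5), (n3, 6),
   (n5p, 6), (n2, 7), (n4, 7), (n3, 8), (n5, 8), (n4, 9), (n5p, 10), (n6p, 11)}

set_option maxRecDepth 100000 in
theorem upU_step : ∀ x ∈ pos7, ∀ y ∈ pos7, adj7 x.1 y.1 → y.2 = x.2 + 1 → x ∈ upU → y ∈ upU := by
  decide

theorem upU_ple {x y : N7 × ℕ} (h : CL.ple adj7 pos7 x y) (hx : x ∈ upU) : y ∈ upU := by
  induction h with
  | refl => exact hx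
  | tail _ h ih => exact upU_step _ h.1 _ h.2.1 h.2.2.1 h.2.2.2 ih

set_option maxRecDepth 100000 in
theorem upU_ge {x : N7 × ℕ} (hx : x ∈ upU) : CL.ple adj7 pos7 (n1, 8) x :=
  ple_up adj7 pos7 upU _ (by decide) (by decide) _ x hx rfl

set_option maxRecDepth 100000 in
theorem midA_ge {x : N7 × ℕ} (hx : x ∈ midA) : CL.ple adj7 pos7 (n2, 9) x :=
  ple_up adj7 pos7 midA _ (by decide) (by decide) _ x hx rfl

set_option maxRecDepth 100000 in
theorem midA_le {x : N7 × ℕ} (hx : x ∈ midA) : CL.ple adj7 pos7 x (n2, 15) :=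
  ple_down adj7 pos7 midA _ (by decide) (by decide) (by decide) _ x hx rfl

set_option maxRecDepth 100000 in
theorem lowB_ge {x : N7 × ℕ} (hx : x ∈ lowB) : CL.ple adj7 pos7 (n2, 1) x :=
  ple_up adj7 pos7 lowB _ (by decide) (by decide) _ x hx rfl

set_option maxRecDepth 100000 in
theorem lowB_le {x : N7 × ℕ} (hx : x ∈ lowB) : CL.ple adj7 pos7 x (n6p, 11) :=
  ple_down adj7 pos7 lowB _ (by decide) (by decide) (by decide) _ x hx rfl

set_option maxRecDepth 100000 in
theorem pos7_cases : ∀ x ∈ pos7, x = (n1, 16) ∨ x ∈ midA ∨ x = (n1, 8) ∨ x ∈ lowB ∨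
    x = (n1, 0) := by decide

/-- The values of the element `m̃`. -/
def mtv (a b : ℕ) (x : N7 × ℕ) : ℕ :=
  if x = (n1, 16) then 0 else if x ∈ upU then a else a + b

theorem mtv_step (a b : ℕ) (x y : N7 × ℕ) (h : CL.step adj7 pos7 x y) :
    mtv a b y ≤ mtv a b x := by
  have h1 := upU_step _ h.1 _ h.2.1 h.2.2.1 h.2.2.2
  have h2 : x ≠ (n1, 16) := by
    rintro rfl
    have h3 : ∀ y ∈ pos7, y.2 ≠ 17 := by decide
    exact h3 y h.2.1 h.2.2.2
  unfold mtv
  rw [if_neg h2]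
  split_ifs <;> first | omega | tauto

/-- The element `m̃`. -/
def mtE (a b : ℕ) : L7 (a + b) :=
  ⟨fun x => mtv a b x.1, by
    intro x
    change mtv a b x.1 ≤ a + b
    unfold mtv
    split_ifs <;> omega,
   fun _ _ h => anti_of_step _ (mtv_step a b) h, trivial⟩

theorem mtE_clauses (a b : ℕ) : clauses14 a b (mtE a b) := by
  refine ⟨rfl, ?_, rfl, ?_, rfl⟩
  · intro x h1 h2
    have h3 : x.1 ∈ upU := upU_ple h1 (by decide)
    have h4 : x.1 ≠ (n1, 16) := by
      intro h
      have := ple_rank h2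
      rw [h] at this
      simp at this
    simp [mtE, mtv, h3, h4]
  · intro x _ h2
    have h3 : x.1 ∉ upU := fun h => absurd (upU_ple h2 h) (by decide)
    have h4 : x.1 ≠ (n1, 16) := by
      intro h
      rw [h] at h3
      exact h3 (by decide)
    simp [mtE, mtv, h3, h4]

theorem clauses_unique (a b : ℕ) (s t : L7 (a + b)) (hs : clauses14 a b s)
    (ht : clauses14 a b t) : s = t := by
  obtain ⟨s1, s2, s3, s4, s5⟩ := hs
  obtain ⟨t1, t2, t3, t4, t5⟩ := ht
  apply Subtype.ext
  funext x
  obtain ⟨x, hx⟩ := x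
  rcases pos7_cases x hx with rfl | h | rfl | h | rfl
  · rw [s1, t1]
  · rw [s2 _ (midA_ge h) (midA_le h), t2 _ (midA_ge h) (midA_le h)]
  · rw [s3, t3]
  · rw [s4 _ (lowB_ge h) (lowB_le h), t4 _ (lowB_ge h) (lowB_le h)]
  · rw [s5, t5]

theorem le_mtE (a b : ℕ) (c : D14 a b) : CL.elLe c.1 (mtE a b) := by
  obtain ⟨c, h0, h8, h16⟩ := c
  rintro ⟨x, hx⟩
  change c.1 _ ≤ mtv a b x
  unfold mtv
  split_ifs with h1 h2
  · subst h1
    exact h16.le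
  · exact (c.2.2.1 ⟨x, hx⟩ ⟨(n1, 8), by decide⟩ (upU_ge h2)).trans h8.le
  · exact c.2.1 _

/-- The correspondence of the colors of `E₆` with those of `E₇`. -/
def col : N6 → N7
  | .m1 => .n2 | .m2 => .n3 | .m3 => .n4 | .m4 => .n5 | .m5 => .n5p | .m6 => .n6p

/-- The inverse correspondence (with a default value at the node `1`). -/
def coli : N7 → N6
  | .n1 => .m1 | .n2 => .m1 | .n3 => .m2 | .n4 => .m3 | .n5 => .m4 | .n5p => .m5 | .n6p => .m6

theorem coli_col (j : N6) : coli (col j) = j := by cases j <;> rfl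

theorem col_ne (j : N6) : col j ≠ n1 := by cases j <;> decide

/-- The map from positions of `P24` to positions of `P₇`. -/
def gg (y : N6 × ℕ) : N7 × ℕ := (col y.1, y.2 + 1)

/-- The inverse map on positions. -/
def gi (x : N7 × ℕ) : N6 × ℕ := (coli x.1, x.2 - 1)

theorem gi_gg (y : N6 × ℕ) : gi (gg y) = y := by simp [gi, gg, coli_col]

set_option maxRecDepth 100000 in
theorem gg_mem : ∀ y ∈ pos24, gg y ∈ pos7 := by decide

set_option maxRecDepth 100000 in
theorem pos7_gg : ∀ x ∈ pos7, x = (n1, 0) ∨ x = (n1, 8) ∨ x = (n1, 16) ∨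
    (x.1 ≠ n1 ∧ gi x ∈ pos24 ∧ gg (gi x) = x) := by decide

theorem adj_col : ∀ i j, adj6 i j → adj7 (col i) (col j) := by decide

theorem step_gg (x y : N6 × ℕ) (h : CL.step adj6 pos24 x y) :
    CL.step adj7 pos7 (gg x) (gg y) := by
  refine ⟨gg_mem _ h.1, gg_mem _ h.2.1, adj_col _ _ h.2.2.1, ?_⟩
  have := h.2.2.2
  simp only [gg]
  omega

theorem ple_gg {x y : N6 × ℕ} (h : CL.ple adj6 pos24 x y) : CL.ple adj7 pos7 (gg x) (gg y) := by
  induction h with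
  | refl => exact Relation.ReflTransGen.refl
  | tail _ h ih => exact ih.tail (step_gg _ _ h)

set_option maxRecDepth 100000 in
theorem step7_cases : ∀ x ∈ pos7, ∀ y ∈ pos7, adj7 x.1 y.1 → y.2 = x.2 + 1 →
    x = (n1, 0) ∨ y = (n1, 16) ∨ (x = (n2, 7) ∧ y = (n1, 8)) ∨ (x = (n1, 8) ∧ y = (n2, 9)) ∨
    (x.1 ≠ n1 ∧ y.1 ≠ n1) := by decide

theorem adj_coli : ∀ i j, i ≠ n1 → j ≠ n1 → adj7 i j → adj6 (coli i) (coli j) := by decide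

set_option maxRecDepth 100000 in
theorem pos7_gi : ∀ x ∈ pos7, x.1 ≠ n1 → gi x ∈ pos24 ∧ 1 ≤ x.2 := by decide

/-- The position of `P₇` attached to a position of `P24`. -/
def gs (y : {y : N6 × ℕ // y ∈ pos24}) : {x : N7 × ℕ // x ∈ pos7} := ⟨gg y.1, gg_mem _ y.2⟩

theorem gs_inj {y z : {y : N6 × ℕ // y ∈ pos24}} (h : gs y = gs z) : y = z := by
  apply Subtype.ext
  rw [← gi_gg y.1, ← gi_gg z.1]
  exact congrArg gi (congrArg Subtype.val h)

/-- A position of `P₇` is one of the three of color `1`, or comes from `P24`. -/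
theorem pos_cases (x : {x : N7 × ℕ // x ∈ pos7}) :
    x = ⟨(n1, 0), by decide⟩ ∨ x = ⟨(n1, 8), by decide⟩ ∨ x = ⟨(n1, 16), by decide⟩ ∨
      ∃ y, gs y = x := by
  rcases pos7_gg x.1 x.2 with h | h | h | ⟨_, h1, h2⟩
  · exact Or.inl (Subtype.ext h)
  · exact Or.inr (Or.inl (Subtype.ext h))
  · exact Or.inr (Or.inr (Or.inl (Subtype.ext h)))
  · exact Or.inr (Or.inr (Or.inr ⟨⟨_, h1⟩, Subtype.ext h2⟩))

/-- The isomorphism from `D` to `L6(a,b)`: restriction along `gs`. -/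
def ff (a b : ℕ) (c : D14 a b) : L6ab a b :=
  ⟨fun y => c.1.1 (gs y), fun y => c.1.2.1 _, fun _ _ h => c.1.2.2.1 _ _ (ple_gg h), by
    obtain ⟨c, h0, h8, h16⟩ := c
    constructor
    · refine le_trans ?_ h8.le
      refine c.2.2.1 _ _ (Relation.ReflTransGen.single ?_)
      exact ⟨by decide, by decide, by decide, rfl⟩
    · change a ≤ c.1 _
      refine h8.symm.le.trans ?_
      refine c.2.2.1 _ _ (Relation.ReflTransGen.single ?_)
      exact ⟨by decide, by decide, by decide, rfl⟩⟩

theorem D_agree {a b : ℕ} (c d : D14 a b) (x : {x : N7 × ℕ // x ∈ pos7}) :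
    c.1.1 x = d.1.1 x ∨ ∃ y, gs y = x := by
  obtain ⟨c, c0, c8, c16⟩ := c
  obtain ⟨d, d0, d8, d16⟩ := d
  rcases pos_cases x with rfl | rfl | rfl | h
  · exact Or.inl (c0.trans d0.symm)
  · exact Or.inl (c8.trans d8.symm)
  · exact Or.inl (c16.trans d16.symm)
  · exact Or.inr h

theorem ff_le {a b : ℕ} (c d : D14 a b) : CL.elLe c.1 d.1 ↔ CL.elLe (ff a b c) (ff a b d) := by
  constructor
  · intro h y
    exact h (gs y)
  · intro h x
    rcases D_agree c d x with h1 | ⟨y, rfl⟩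
    · exact h1.le
    · exact h y

theorem ff_edge {a b : ℕ} (j : N6) (c d : D14 a b) :
    CL.edge (col j) c.1 d.1 ↔ CL.edge j (ff a b c) (ff a b d) := by
  constructor
  · rintro ⟨x, h1, h2, h3⟩
    rcases D_agree c d x with h | ⟨y, rfl⟩
    · omega
    · refine ⟨y, ?_, h2, ?_⟩
      · have h4 : coli (col y.1.1) = coli (col j) := congrArg coli h1
        rwa [coli_col, coli_col] at h4
      · intro z hz
        exact h3 (gs z) (fun h => hz (gs_inj h))
  · rintro ⟨y, h1, h2, h3⟩
    refine ⟨gs y, congrArg col h1, h2, ?_⟩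
    intro z hz
    rcases D_agree c d z with h | ⟨w, rfl⟩
    · exact h.symm
    · exact h3 w (fun h => hz (congrArg gs h))

/-- Extension of a labelling of `P24` by zero. -/
def ext24 (e : {y : N6 × ℕ // y ∈ pos24} → ℕ) (y : N6 × ℕ) : ℕ :=
  if h : y ∈ pos24 then e ⟨y, h⟩ else 0

theorem ext24_mem (e : {y : N6 × ℕ // y ∈ pos24} → ℕ) (y : N6 × ℕ) (h : y ∈ pos24) :
    ext24 e y = e ⟨y, h⟩ := dif_pos h

/-- The values of the preimage in `D` of an element of `L6(a,b)`. -/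
def invv (a b : ℕ) (e : {y : N6 × ℕ // y ∈ pos24} → ℕ) (x : N7 × ℕ) : ℕ :=
  if x.1 = n1 then (if x.2 = 0 then a + b else if x.2 = 8 then a else 0) else ext24 e (gi x)

theorem invv_le (a b : ℕ) (e : L6ab a b) (x : N7 × ℕ) : invv a b e.1 x ≤ a + b := by
  unfold invv ext24
  split_ifs
  · omega
  · omega
  · omega
  · exact e.2.1 _
  · omega

theorem invv_step (a b : ℕ) (e : L6ab a b) (x y : N7 × ℕ) (h : CL.step adj7 pos7 x y) :
    invv a b e.1 y ≤ invv a b e.1 x := by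
  rcases step7_cases _ h.1 _ h.2.1 h.2.2.1 h.2.2.2 with
    rfl | rfl | ⟨rfl, rfl⟩ | ⟨rfl, rfl⟩ | ⟨h1, h2⟩
  · exact invv_le a b e y
  · exact Nat.zero_le _
  · exact e.2.2.2.2
  · exact e.2.2.2.1
  · obtain ⟨h3, h5⟩ := pos7_gi x h.1 h1
    obtain ⟨h4, h6⟩ := pos7_gi y h.2.1 h2
    have h7 := h.2.2.2
    unfold invv
    rw [if_neg h1, if_neg h2, ext24_mem _ _ h3, ext24_mem _ _ h4]
    exact e.2.2.1 _ _ (Relation.ReflTransGen.single ⟨h3, h4, adj_coli _ _ h1 h2 h.2.2.1, by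
      simp only [gi]
      omega⟩)

/-- The preimage in `D` of an element of `L6(a,b)`. -/
def finv (a b : ℕ) (e : L6ab a b) : D14 a b :=
  ⟨⟨fun x => invv a b e.1 x.1, fun x => invv_le a b e x.1,
    fun _ _ h => anti_of_step _ (invv_step a b e) h, trivial⟩, rfl, rfl, rfl⟩

theorem ff_bij (a b : ℕ) : Function.Bijective (ff a b) := by
  constructor
  · intro c d h
    apply Subtype.ext
    apply Subtype.ext
    funext x
    rcases D_agree c d x with h1 | ⟨y, rfl⟩
    · exact h1
    · exact congrFun (congrArg Subtype.val h) y
  · intro e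
    refine ⟨finv a b e, ?_⟩
    apply Subtype.ext
    funext y
    change invv a b e.1 (gg y.1) = e.1 y
    unfold invv
    rw [if_neg (show (gg y.1).1 ≠ n1 from col_ne _), gi_gg, ext24_mem _ _ y.2]

/-- the clauses determine a unique element `m̃ ∈ L7(a+b)`, which is the
unique maximal element of `D`, and `D` is isomorphic to `L6(a,b)` as a poset with colored
covering relations (with `E₇` colors `2,3,4,5,5',6'` matching `E₆` colors
`1',2',3',4',5',6'`). -/
theorem statement_14 (a b : ℕ) :
    ∃ mt : L7 (a + b), clauses14 a b mt ∧ (∀ mt' : L7 (a + b), clauses14 a b mt' → mt' = mt) ∧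
      (∀ c : D14 a b, CL.elLe c.1 mt) ∧
      ∃ f : D14 a b → L6ab a b, Function.Bijective f ∧
        (∀ c d : D14 a b, CL.elLe c.1 d.1 ↔ CL.elLe (f c) (f d)) ∧
        ∀ c d : D14 a b,
          (CL.edge n2 c.1 d.1 ↔ CL.edge m1 (f c) (f d)) ∧
          (CL.edge n3 c.1 d.1 ↔ CL.edge m2 (f c) (f d)) ∧
          (CL.edge n4 c.1 d.1 ↔ CL.edge m3 (f c) (f d)) ∧
          (CL.edge n5 c.1 d.1 ↔ CL.edge m4 (f c) (f d)) ∧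
          (CL.edge n5p c.1 d.1 ↔ CL.edge m5 (f c) (f d)) ∧
          (CL.edge n6p c.1 d.1 ↔ CL.edge m6 (f c) (f d)) := by
  exact ⟨mtE a b, mtE_clauses a b, fun t ht => clauses_unique a b t _ ht (mtE_clauses a b),
    le_mtE a b, ff a b, ff_bij a b, ff_le, fun c d => ⟨ff_edge m1 c d, ff_edge m2 c d,
      ff_edge m3 c d, ff_edge m4 c d, ff_edge m5 c d, ff_edge m6 c d⟩⟩

end
end

section
/- Fix a nonnegative integer k. Let m' ∈ L7(k) be given by m'((1,16)) = 0 and m'(x) = k for all other x ∈ P7, and let D' := {c ∈ L7(k) : c((1,16)) = 0, c((1,8)) = k, c((1,0)) = k}. Let m'' ∈ L7(k) be given by m''(x) = 0 for every x ∈ P7 with x ≥ (1,8) and m''(x) = k for every x ∈ P7 with x ≤ (6',11) (these clauses determine m'' at all 27 positions), and let D'' := {c ∈ L7(k) : c((1,16)) = 0, c((1,8)) = 0, c((1,0)) = k}. Regard D' and D'' as posets with the induced order and with covering relations colored as in L7(k) (all colors lie in {2,3,4,5,5',6'}). Then m' is the unique maximal element of D' and m'' is the unique maximal element of D''; and, under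 the correspondence sending the E7 colors 2, 3, 4, 5, 5', 6' to the E6 colors 1', 2', 3', 4', 5', 6' respectively, D' is isomorphic to L6'(k) and D'' is isomorphic to L6''(k) as posets with colored covering relations. -/
noncomputable section

open N7

open N6

/-- The set `D'`. -/
def D15p (k : ℕ) : Type :=
  {c : L7 k // c.1 ⟨(n1, 16), by decide⟩ = 0 ∧ c.1 ⟨(n1, 8), by decide⟩ = k ∧
    c.1 ⟨(n1, 0), by decide⟩ = k}

/-- The set `D''`. -/
def D15pp (k : ℕ) : Type :=
  {c : L7 k // c.1 ⟨(n1, 16), by decide⟩ = 0 ∧ c.1 ⟨(n1, 8), by decide⟩ = 0 ∧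
    c.1 ⟨(n1, 0), by decide⟩ = k}

/-- The defining clauses for the element `m''` of `L7(k)`. -/
def clauses15pp (k : ℕ) (mt : L7 k) : Prop :=
  (∀ x : {x : N7 × ℕ // x ∈ pos7}, CL.ple adj7 pos7 (n1, 8) x.1 → mt.1 x = 0) ∧
  (∀ x : {x : N7 × ℕ // x ∈ pos7}, CL.ple adj7 pos7 x.1 (n6p, 11) → mt.1 x = k)


/-! ### Helper lemmas -/

/-- The correspondence of `E₆` colors with `E₇` colors. -/
def phi15 : N6 → N7
  | m1 => n2
  | m2 => n3
  | m3 => n4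
  | m4 => n5
  | m5 => n5p
  | m6 => n6p

/-- Recolor a position and shift its rank by `s`. -/
def sh15 (s : ℕ) (x : N6 × ℕ) : N7 × ℕ := (phi15 x.1, x.2 + s)

theorem phi15_inj : ∀ a b, phi15 a = phi15 b → a = b := by decide

theorem phi15_adj : ∀ a b, adj6 a b ↔ adj7 (phi15 a) (phi15 b) := by decide

theorem sh15_inj (s : ℕ) {x y : N6 × ℕ} (h : sh15 s x = sh15 s y) : x = y := by
  have h1 := phi15_inj _ _ (congrArg Prod.fst h)
  have h2 : x.2 + s = y.2 + s := congrArg Prod.snd h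
  exact Prod.ext h1 (by omega)

/-- It suffices to check monotonicity along the generating steps. -/
theorem mono_of_step {N : Type} {adj : N → N → Prop} {pos : Finset (N × ℕ)}
    (c : {x : N × ℕ // x ∈ pos} → ℕ)
    (h : ∀ x y : {x : N × ℕ // x ∈ pos}, adj y.1.1 x.1.1 → x.1.2 = y.1.2 + 1 → c x ≤ c y) :
    ∀ x y : {x : N × ℕ // x ∈ pos}, CL.ple adj pos y.1 x.1 → c x ≤ c y := by
  intro x y hxy
  have : ∀ z, CL.ple adj pos y.1 z → ∀ hz : z ∈ pos, c ⟨z, hz⟩ ≤ c y := by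
    intro z hz
    unfold CL.ple at hz
    induction hz with
    | refl => intro _; exact le_rfl
    | tail _ hs ih =>
      intro hz
      exact le_trans (h ⟨_, hz⟩ ⟨_, hs.1⟩ hs.2.2.1 hs.2.2.2) (ih hs.1)
  exact this x.1 hxy x.2

/-- Bounded-length reachability in the poset of positions. -/
def reach15 : ℕ → N7 × ℕ → N7 × ℕ → Bool
  | 0, x, y => decide (x = y)
  | n + 1, x, y => decide (x = y) ||
      decide (∃ z ∈ pos7, adj7 x.1 z.1 ∧ z.2 = x.2 + 1 ∧ reach15 n z y = true)

theorem ple_of_reach15 (n : ℕ) : ∀ x y, x ∈ pos7 → reach15 n x y = true →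
    CL.ple adj7 pos7 x y := by
  induction n with
  | zero =>
    intro x y _ h
    have h' : x = y := by simpa [reach15] using h
    subst h'
    exact Relation.ReflTransGen.refl
  | succ n ih =>
    intro x y hx h
    rw [reach15, Bool.or_eq_true, decide_eq_true_eq, decide_eq_true_eq] at h
    rcases h with h | ⟨z, hz, ha, hr, hzy⟩
    · subst h
      exact Relation.ReflTransGen.refl
    · exact Relation.ReflTransGen.head ⟨hx, hz, ha, hr⟩ (ih z y hz hzy)

/-- The step-compatibility conditions on the image of the positions and the zero set. -/
def good15 (s : ℕ) (posB : Finset (N6 × ℕ)) (Z : Finset (N7 × ℕ)) : Prop :=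
  ∀ x ∈ pos7, ∀ y ∈ pos7, adj7 x.1 y.1 → y.2 = x.2 + 1 →
    (x ∈ Z → y ∈ Z) ∧ (y ∈ posB.image (sh15 s) → x ∉ Z) ∧
    (x ∈ posB.image (sh15 s) → y ∈ Z ∨ y ∈ posB.image (sh15 s))

/-- The maximal element attached to a zero set. -/
theorem max15 (k : ℕ) (s : ℕ) (posB : Finset (N6 × ℕ)) (Z : Finset (N7 × ℕ))
    (hg : good15 s posB Z) :
    ∃ m : L7 k, ∀ x, m.1 x = if x.1 ∈ Z then 0 else k := by
  refine ⟨⟨fun x => if x.1 ∈ Z then 0 else k, ?_, ?_, trivial⟩, fun x => rfl⟩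
  · intro x
    dsimp only
    split_ifs <;> omega
  · apply mono_of_step
    intro x y ha hr
    have := (hg y.1 y.2 x.1 x.2 ha hr).1
    split_ifs <;> first | omega | tauto

theorem key15 (k : ℕ) (s : ℕ) (posB : Finset (N6 × ℕ)) (Z : Finset (N7 × ℕ))
    (P : ({x : N7 × ℕ // x ∈ pos7} → ℕ) → Prop)
    (h1 : ∀ x ∈ posB, sh15 s x ∈ pos7)
    (hg : good15 s posB Z)
    (hP : ∀ c : L7 k, P c.1 ↔ ∀ x : {x : N7 × ℕ // x ∈ pos7},
      x.1 ∉ posB.image (sh15 s) → c.1 x = if x.1 ∈ Z then 0 else k) :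
    ∃ f : {c : L7 k // P c.1} → CL.Elt adj6 posB k (fun _ => True), Function.Bijective f ∧
      (∀ c d, CL.elLe c.1 d.1 ↔ CL.elLe (f c) (f d)) ∧
      ∀ i c d, CL.edge (phi15 i) c.1 d.1 ↔ CL.edge i (f c) (f d) := by
  classical
  let g : {x : N6 × ℕ // x ∈ posB} → {x : N7 × ℕ // x ∈ pos7} :=
    fun x => ⟨sh15 s x.1, h1 x.1 x.2⟩
  have ginj : Function.Injective g := fun x y h =>
    Subtype.ext (sh15_inj s (congrArg Subtype.val h))
  have gim : ∀ x : {x : N7 × ℕ // x ∈ pos7}, x.1 ∈ posB.image (sh15 s) → ∃ y, g y = x := by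
    intro x hx
    obtain ⟨y, hy, hyx⟩ := Finset.mem_image.1 hx
    exact ⟨⟨y, hy⟩, Subtype.ext hyx⟩
  have gmem : ∀ y, (g y).1 ∈ posB.image (sh15 s) := fun y =>
    Finset.mem_image_of_mem _ y.2
  -- agreement outside of the image
  have hout : ∀ (c d : {c : L7 k // P c.1}) (x : {x : N7 × ℕ // x ∈ pos7}),
      x.1 ∉ posB.image (sh15 s) → c.1.1 x = d.1.1 x := by
    intro c d x hx
    rw [(hP c.1).1 c.2 x hx, (hP d.1).1 d.2 x hx]
  let f : {c : L7 k // P c.1} → CL.Elt adj6 posB k (fun _ => True) := fun c =>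
    ⟨fun x => c.1.1 (g x), fun x => c.1.2.1 _, by
      apply mono_of_step
      intro x y ha hr
      apply c.1.2.2.1
      refine Relation.ReflTransGen.single ⟨(g y).2, (g x).2, (phi15_adj _ _).1 ha, ?_⟩
      change x.1.2 + s = y.1.2 + s + 1
      omega, trivial⟩
  have hf : ∀ c x, (f c).1 x = c.1.1 (g x) := fun _ _ => rfl
  refine ⟨f, ⟨?_, ?_⟩, ?_, ?_⟩
  · intro c d h
    apply Subtype.ext
    apply Subtype.ext
    funext x
    by_cases hx : x.1 ∈ posB.image (sh15 s)
    · obtain ⟨y, rfl⟩ := gim x hx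
      exact congrFun (congrArg Subtype.val h) y
    · exact hout c d x hx
  · intro b
    let e : {x : N7 × ℕ // x ∈ pos7} → ℕ := fun x =>
      if h : ∃ y, g y = x then b.1 h.choose else if x.1 ∈ Z then 0 else k
    have eg : ∀ y, e (g y) = b.1 y := by
      intro y
      have h : ∃ y', g y' = g y := ⟨y, rfl⟩
      have : e (g y) = b.1 h.choose := dif_pos h
      rw [this, ginj h.choose_spec]
    have eo : ∀ x : {x : N7 × ℕ // x ∈ pos7}, x.1 ∉ posB.image (sh15 s) →
        e x = if x.1 ∈ Z then 0 else k := by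
      intro x hx
      have h : ¬ ∃ y, g y = x := by
        rintro ⟨y, rfl⟩
        exact hx (gmem y)
      exact dif_neg h
    have ek : ∀ x, e x ≤ k := by
      intro x
      by_cases hx : x.1 ∈ posB.image (sh15 s)
      · obtain ⟨y, rfl⟩ := gim x hx
        rw [eg]
        exact b.2.1 y
      · rw [eo x hx]
        split_ifs <;> omega
    have em : ∀ x y : {x : N7 × ℕ // x ∈ pos7}, CL.ple adj7 pos7 y.1 x.1 → e x ≤ e y := by
      apply mono_of_step
      intro x y ha hr
      obtain ⟨q1, q2, q3⟩ := hg y.1 y.2 x.1 x.2 ha hr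
      by_cases hx : x.1 ∈ posB.image (sh15 s)
      · by_cases hy : y.1 ∈ posB.image (sh15 s)
        · obtain ⟨x', rfl⟩ := gim x hx
          obtain ⟨y', rfl⟩ := gim y hy
          rw [eg, eg]
          apply b.2.2.1
          refine Relation.ReflTransGen.single ⟨y'.2, x'.2, (phi15_adj _ _).2 ha, ?_⟩
          change x'.1.2 + s = y'.1.2 + s + 1 at hr
          omega
        · rw [eo y hy, if_neg (q2 hx)]
          exact ek x
      · by_cases hy : y.1 ∈ posB.image (sh15 s)
        · have hxZ : x.1 ∈ Z := (q3 hy).resolve_right hx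
          rw [eo x hx, if_pos hxZ]
          exact Nat.zero_le _
        · rw [eo x hx, eo y hy]
          split_ifs <;> first | omega | tauto
    let E : L7 k := ⟨e, ek, em, trivial⟩
    refine ⟨⟨E, (hP E).2 eo⟩, ?_⟩
    apply Subtype.ext
    funext y
    exact eg y
  · intro c d
    constructor
    · intro h x
      exact h (g x)
    · intro h x
      by_cases hx : x.1 ∈ posB.image (sh15 s)
      · obtain ⟨y, rfl⟩ := gim x hx
        exact h y
      · exact le_of_eq (hout c d x hx)
  · intro i c d
    constructor
    · rintro ⟨x, hi, hx, ho⟩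
      by_cases hxi : x.1 ∈ posB.image (sh15 s)
      · obtain ⟨y, rfl⟩ := gim x hxi
        exact ⟨y, phi15_inj _ _ hi, hx, fun z hz => ho (g z) (fun h => hz (ginj h))⟩
      · have := hout c d x hxi
        omega
    · rintro ⟨y, hi, hy, ho⟩
      refine ⟨g y, congrArg phi15 hi, hy, ?_⟩
      intro x hx
      by_cases hxi : x.1 ∈ posB.image (sh15 s)
      · obtain ⟨z, rfl⟩ := gim x hxi
        exact ho z (fun h => hx (congrArg g h))
      · exact hout d c x hxi

/-- The zero set of the first maximal element. -/
def Zp : Finset (N7 × ℕ) := {(n1, 16)}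

/-- The zero set of the second maximal element: the positions above `(1,8)`. -/
def Zpp : Finset (N7 × ℕ) :=
  {(n1, 8), (n2, 9), (n3, 10), (n4, 11), (n5, 12), (n5p, 12), (n4, 13), (n3, 14), (n2, 15),
   (n1, 16)}

theorem good_p : good15 5 pos16p Zp := by
  unfold good15
  decide +kernel

theorem good_pp : good15 1 pos16pp Zpp := by
  unfold good15
  decide +kernel

theorem maps_p : ∀ x ∈ pos16p, sh15 5 x ∈ pos7 := by decide +kernel

theorem maps_pp : ∀ x ∈ pos16pp, sh15 1 x ∈ pos7 := by decide +kernel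

theorem out_p : ∀ x ∈ pos7, x ∉ pos16p.image (sh15 5) →
    x ∈ Zp ∨ (x ∉ Zp ∧ reach15 8 x (n1, 8) = true) := by decide +kernel

theorem out_pp : ∀ x ∈ pos7, x ∉ pos16pp.image (sh15 1) →
    x ∈ Zpp ∨ x = (n1, 0) := by decide +kernel

theorem reach_Zpp : ∀ x ∈ Zpp, reach15 8 (n1, 8) x = true := by decide +kernel

theorem reach_compl_Zpp : ∀ x ∈ pos7, x ∉ Zpp → reach15 11 x (n6p, 11) = true := by
  decide +kernel

theorem Zp_disj : ∀ x ∈ Zp, x ∉ pos16p.image (sh15 5) := by decide +kernel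

theorem Zpp_disj : ∀ x ∈ Zpp, x ∉ pos16pp.image (sh15 1) := by decide +kernel

theorem Zpp_closed {x y : N7 × ℕ} (h : CL.ple adj7 pos7 x y) : x ∈ Zpp → y ∈ Zpp := by
  intro hx
  unfold CL.ple at h
  induction h with
  | refl => exact hx
  | tail _ hs ih => exact (good_pp _ hs.1 _ hs.2.1 hs.2.2.1 hs.2.2.2).1 ih

theorem hP_p (k : ℕ) (c : L7 k) :
    (c.1 ⟨(n1, 16), by decide⟩ = 0 ∧ c.1 ⟨(n1, 8), by decide⟩ = k ∧
      c.1 ⟨(n1, 0), by decide⟩ = k) ↔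
    ∀ x : {x : N7 × ℕ // x ∈ pos7},
      x.1 ∉ pos16p.image (sh15 5) → c.1 x = if x.1 ∈ Zp then 0 else k := by
  constructor
  · rintro ⟨ha, hb, _⟩ x hx
    rcases out_p x.1 x.2 hx with h | ⟨h, hr⟩
    · rw [if_pos h]
      have hxe : x = ⟨(n1, 16), by decide⟩ := Subtype.ext (Finset.mem_singleton.1 h)
      rw [hxe]
      exact ha
    · rw [if_neg h]
      have := c.2.2.1 ⟨(n1, 8), by decide⟩ x (ple_of_reach15 _ _ _ x.2 hr)
      exact le_antisymm (c.2.1 x) (le_trans (le_of_eq hb.symm) this)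
  · intro h
    refine ⟨?_, ?_, ?_⟩
    · rw [h _ (by decide +kernel), if_pos (by decide +kernel)]
    · rw [h _ (by decide +kernel), if_neg (by decide +kernel)]
    · rw [h _ (by decide +kernel), if_neg (by decide +kernel)]

theorem hP_pp (k : ℕ) (c : L7 k) :
    (c.1 ⟨(n1, 16), by decide⟩ = 0 ∧ c.1 ⟨(n1, 8), by decide⟩ = 0 ∧
      c.1 ⟨(n1, 0), by decide⟩ = k) ↔
    ∀ x : {x : N7 × ℕ // x ∈ pos7},
      x.1 ∉ pos16pp.image (sh15 1) → c.1 x = if x.1 ∈ Zpp then 0 else k := by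
  constructor
  · rintro ⟨_, hb, hc⟩ x hx
    rcases out_pp x.1 x.2 hx with h | h
    · rw [if_pos h]
      have := c.2.2.1 x ⟨(n1, 8), by decide⟩ (ple_of_reach15 _ _ _ (by decide) (reach_Zpp _ h))
      omega
    · have hxe : x = ⟨(n1, 0), by decide⟩ := Subtype.ext h
      subst hxe
      rw [if_neg (by decide +kernel)]
      exact hc
  · intro h
    refine ⟨?_, ?_, ?_⟩
    · rw [h _ (by decide +kernel), if_pos (by decide +kernel)]
    · rw [h _ (by decide +kernel), if_pos (by decide +kernel)]
    · rw [h _ (by decide +kernel), if_neg (by decide +kernel)]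

/-- `m'` is the unique maximal element of `D'` and `m''` of `D''`, and,
matching `E₇` colors `2,3,4,5,5',6'` with `E₆` colors `1',…,6'`, `D' ≅ L6'(k)` and
`D'' ≅ L6''(k)` as posets with colored covering relations. -/
theorem statement_15 (k : ℕ) :
    (∃ mp : L7 k,
      (∀ x : {x : N7 × ℕ // x ∈ pos7},
        mp.1 x = if x = (⟨(n1, 16), by decide⟩ : {x : N7 × ℕ // x ∈ pos7}) then 0 else k) ∧
      (∀ c : D15p k, CL.elLe c.1 mp) ∧
      ∃ f : D15p k → L6p k, Function.Bijective f ∧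
        (∀ c d : D15p k, CL.elLe c.1 d.1 ↔ CL.elLe (f c) (f d)) ∧
        ∀ c d : D15p k,
          (CL.edge n2 c.1 d.1 ↔ CL.edge m1 (f c) (f d)) ∧
          (CL.edge n3 c.1 d.1 ↔ CL.edge m2 (f c) (f d)) ∧
          (CL.edge n4 c.1 d.1 ↔ CL.edge m3 (f c) (f d)) ∧
          (CL.edge n5 c.1 d.1 ↔ CL.edge m4 (f c) (f d)) ∧
          (CL.edge n5p c.1 d.1 ↔ CL.edge m5 (f c) (f d)) ∧
          (CL.edge n6p c.1 d.1 ↔ CL.edge m6 (f c) (f d))) ∧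
    (∃ mpp : L7 k, clauses15pp k mpp ∧ (∀ mt' : L7 k, clauses15pp k mt' → mt' = mpp) ∧
      (∀ c : D15pp k, CL.elLe c.1 mpp) ∧
      ∃ f : D15pp k → L6pp k, Function.Bijective f ∧
        (∀ c d : D15pp k, CL.elLe c.1 d.1 ↔ CL.elLe (f c) (f d)) ∧
        ∀ c d : D15pp k,
          (CL.edge n2 c.1 d.1 ↔ CL.edge m1 (f c) (f d)) ∧
          (CL.edge n3 c.1 d.1 ↔ CL.edge m2 (f c) (f d)) ∧
          (CL.edge n4 c.1 d.1 ↔ CL.edge m3 (f c) (f d)) ∧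
          (CL.edge n5 c.1 d.1 ↔ CL.edge m4 (f c) (f d)) ∧
          (CL.edge n5p c.1 d.1 ↔ CL.edge m5 (f c) (f d)) ∧
          (CL.edge n6p c.1 d.1 ↔ CL.edge m6 (f c) (f d))) := by
  constructor
  · obtain ⟨m, hm⟩ := max15 k 5 pos16p Zp good_p
    refine ⟨m, ?_, ?_, ?_⟩
    · intro x
      rw [hm x]
      have : x.1 ∈ Zp ↔ x = (⟨(n1, 16), by decide⟩ : {x : N7 × ℕ // x ∈ pos7}) := by
        rw [Subtype.ext_iff]
        exact Finset.mem_singleton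
      simp only [this]
    · intro c x
      rw [hm x]
      by_cases hx : x.1 ∈ Zp
      · have h := (hP_p k c.1).1 c.2 x (Zp_disj _ hx)
        rw [if_pos hx] at h ⊢
        exact le_of_eq h
      · rw [if_neg hx]
        exact c.1.2.1 x
    · obtain ⟨f, hb, ho, he⟩ := key15 k 5 pos16p Zp
        (fun c => c ⟨(n1, 16), by decide⟩ = 0 ∧ c ⟨(n1, 8), by decide⟩ = k ∧
          c ⟨(n1, 0), by decide⟩ = k) maps_p good_p (hP_p k)
      exact ⟨f, hb, ho, fun c d => ⟨he m1 c d, he m2 c d, he m3 c d, he m4 c d, he m5 c d,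
        he m6 c d⟩⟩
  · obtain ⟨m, hm⟩ := max15 k 1 pos16pp Zpp good_pp
    refine ⟨m, ⟨?_, ?_⟩, ?_, ?_, ?_⟩
    · intro x hx
      rw [hm x, if_pos (Zpp_closed hx (by decide))]
    · intro x hx
      rw [hm x, if_neg]
      intro h
      exact absurd (Zpp_closed hx h) (by decide)
    · intro mt h
      apply Subtype.ext
      funext x
      rw [hm x]
      by_cases hx : x.1 ∈ Zpp
      · rw [if_pos hx]
        exact h.1 x (ple_of_reach15 _ _ _ (by decide) (reach_Zpp _ hx))
      · rw [if_neg hx]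
        exact h.2 x (ple_of_reach15 _ _ _ x.2 (reach_compl_Zpp _ x.2 hx))
    · intro c x
      rw [hm x]
      by_cases hx : x.1 ∈ Zpp
      · have h := (hP_pp k c.1).1 c.2 x (Zpp_disj _ hx)
        rw [if_pos hx] at h ⊢
        exact le_of_eq h
      · rw [if_neg hx]
        exact c.1.2.1 x
    · obtain ⟨f, hb, ho, he⟩ := key15 k 1 pos16pp Zpp
        (fun c => c ⟨(n1, 16), by decide⟩ = 0 ∧ c ⟨(n1, 8), by decide⟩ = 0 ∧
          c ⟨(n1, 0), by decide⟩ = k) maps_pp good_pp (hP_pp k)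
      exact ⟨f, hb, ho, fun c d => ⟨he m1 c d, he m2 c d, he m3 c d, he m4 c d, he m5 c d,
        he m6 c d⟩⟩

end
end
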